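/- Dirichlet energy of a harmonic function on the disk is controlled by the tangential energy of its boundary value: let q ≥ 1 be an integer and let ζ : ℝ² → ℝ^q be continuously differentiable on a neighborhood of the closed unit disk and harmonic on the open unit disk D (each component is twice continuously differentiable on D with vanishing Laplacian). Then ∫_D ‖Dζ(x)‖² dx ≤ ∫_0^{2π} ‖(d/dθ) ζ(cos θ, sin θ)‖² dθ. -/

import Mathlib

open MeasureTheory Metric
open scoped MeasureTheory

/-!
Let `w` be harmonic on the disk of radius `R` about `c`. Its Hopf differential
`‖w_x‖² - ‖w_y‖² - 2i⟪w_x, w_y⟫` is holomorphic, so `(z - c)²` times it has mean value `0` over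
the boundary circle. The real part of this product is `R²` times the difference between the
squared radial and tangential derivatives of `w`; hence these have equal means, and the mean of
the energy density `‖w_x‖² + ‖w_y‖²` over the circle is twice that of the squared tangential
derivative. Since the energy density is subharmonic, its means over the smaller concentric
circles are at most the mean over the boundary, and integration in polar coordinates gives the
inequality, with the factor `1/2` in `∫₀ᴿ r dr = R²/2` cancelling the factor two.
-/

section CircleAverage

open Real Set

variable {E : Type*} [NormedAddCommGroup E] [NormedSpace ℝ E]

theorem continuous_circleMap_circleMap {X : Type*} [TopologicalSpace X] {f : ℂ → ℂ → X}
    {c d : ℂ} {r R : ℝ} (hf : ContinuousOn f.uncurry (sphere c |r| ×ˢ sphere d |R|)) :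
    Continuous fun p : ℝ × ℝ => f (circleMap c r p.1) (circleMap d R p.2) :=
  hf.comp_continuous (f := fun p : ℝ × ℝ => (circleMap c r p.1, circleMap d R p.2))
    (by fun_prop) fun p => ⟨circleMap_mem_sphere' c r p.1, circleMap_mem_sphere' d R p.2⟩

theorem circleIntegrable_circleAverage {f : ℂ → ℂ → E} {c d : ℂ} {r R : ℝ}
    (hf : ContinuousOn f.uncurry (sphere c |r| ×ˢ sphere d |R|)) :
    CircleIntegrable (fun w => circleAverage (f w) d R) c r :=
  ((intervalIntegral.continuous_parametric_intervalIntegral_of_continuous'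
    (continuous_circleMap_circleMap hf) 0 (2 * π)).const_smul (2 * π)⁻¹).intervalIntegrable _ _

theorem circleAverage_circleAverage_comm {f : ℂ → ℂ → E} {c d : ℂ} {r R : ℝ}
    (hf : ContinuousOn f.uncurry (sphere c |r| ×ˢ sphere d |R|)) :
    circleAverage (fun w => circleAverage (f w) d R) c r =
      circleAverage (fun z => circleAverage (f · z) c r) d R := by
  have hcompact : IsCompact (uIcc 0 (2 * π) ×ˢ uIcc 0 (2 * π)) :=
    isCompact_uIcc.prod isCompact_uIcc
  simp only [circleAverage_def, intervalIntegral.integral_smul]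
  rw [intervalIntegral_intervalIntegral_swap]
  exact ((continuous_circleMap_circleMap hf).continuousOn.integrableOn_compact hcompact).mono_set
    (prod_mono uIoc_subset_uIcc uIoc_subset_uIcc)

theorem circleAverage_eq_integral_neg_pi_pi (f : ℂ → E) (c : ℂ) (r : ℝ) :
    circleAverage f c r = (2 * π)⁻¹ • ∫ θ in -π..π, f (circleMap c r θ) := by
  rw [circleAverage_eq_integral_add (-π),
    intervalIntegral.integral_comp_add_right fun θ => f (circleMap c r θ)]
  congr 2 <;> ring

theorem add_polarCoord_symm_eq_circleMap (c : ℂ) (p : ℝ × ℝ) :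
    c + Complex.polarCoord.symm p = circleMap c p.1 p.2 := by
  simp [circleMap, Complex.exp_mul_I]

theorem circleMap_mem_ball_iff {c : ℂ} {r R θ : ℝ} : circleMap c r θ ∈ ball c R ↔ |r| < R := by
  rw [mem_ball, dist_eq_norm, circleMap_sub_center, norm_circleMap_zero]

theorem integrableOn_smul_circleMap {f : ℂ → E} {c : ℂ} {R : ℝ}
    (hf : ContinuousOn f (closedBall c R)) (a b : ℝ) :
    IntegrableOn (fun p : ℝ × ℝ => p.1 • f (circleMap c p.1 p.2)) (Icc 0 R ×ˢ Icc a b) := by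
  refine ContinuousOn.integrableOn_compact (isCompact_Icc.prod isCompact_Icc) ?_
  refine continuousOn_fst.smul (hf.comp (by simp only [circleMap]; fun_prop) ?_)
  rintro ⟨r, t⟩ ⟨hr, -⟩
  exact closedBall_subset_closedBall hr.2 (circleMap_mem_closedBall c hr.1 t)

theorem setIntegral_ball_eq_integral_circleAverage {f : ℂ → E} {c : ℂ} {R : ℝ} (hR : 0 ≤ R)
    (hf : ContinuousOn f (closedBall c R)) :
    ∫ z in ball c R, f z = ∫ r in 0..R, (2 * π * r) • circleAverage f c r := by
  set S := Ioo (0 : ℝ) R ×ˢ Ioo (-π) π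
  have hpolar : ∀ p ∈ polarCoord.target,
      p.1 • (ball c R).indicator f (c + Complex.polarCoord.symm p) =
        S.indicator (fun p => p.1 • f (circleMap c p.1 p.2)) p := by
    rintro ⟨r, t⟩ ⟨hr : 0 < r, ht⟩
    have hmem : circleMap c r t ∈ ball c R ↔ (r, t) ∈ S := by
      rw [circleMap_mem_ball_iff, abs_of_pos hr]
      exact ⟨fun h => ⟨⟨hr, h⟩, ht⟩, fun h => h.1.2⟩
    rw [add_polarCoord_symm_eq_circleMap]
    by_cases h : (r, t) ∈ S
    · rw [indicator_of_mem (hmem.2 h), indicator_of_mem h]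
    · rw [indicator_of_notMem (mt hmem.1 h), indicator_of_notMem h, smul_zero]
  have hint : IntegrableOn (fun p : ℝ × ℝ => p.1 • f (circleMap c p.1 p.2)) S :=
    (integrableOn_smul_circleMap hf (-π) π).mono_set
      (prod_mono Ioo_subset_Icc_self Ioo_subset_Icc_self)
  calc ∫ z in ball c R, f z = ∫ z, (ball c R).indicator f (c + z) := by
        rw [integral_add_left_eq_self, integral_indicator measurableSet_ball]
    _ = ∫ p in polarCoord.target, S.indicator (fun p => p.1 • f (circleMap c p.1 p.2)) p := by
        rw [← Complex.integral_comp_polarCoord_symm]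
        exact setIntegral_congr_fun polarCoord.open_target.measurableSet hpolar
    _ = ∫ p in S, p.1 • f (circleMap c p.1 p.2) := by
        rw [setIntegral_indicator (measurableSet_Ioo.prod measurableSet_Ioo), inter_eq_right.2]
        exact prod_mono Ioo_subset_Ioi_self subset_rfl
    _ = ∫ r in Ioo 0 R, ∫ t in Ioo (-π) π, r • f (circleMap c r t) := by
        rw [Measure.volume_eq_prod] at hint ⊢
        exact setIntegral_prod _ hint
    _ = ∫ r in 0..R, (2 * π * r) • circleAverage f c r := by
        rw [intervalIntegral.integral_of_le hR, integral_Ioc_eq_integral_Ioo]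
        refine setIntegral_congr_fun measurableSet_Ioo fun r _ => ?_
        simp only [circleAverage_eq_integral_neg_pi_pi, integral_smul,
          ← integral_Ioc_eq_integral_Ioo,
          ← intervalIntegral.integral_of_le (neg_lt_self pi_pos).le, smul_smul]
        congr 1
        field_simp

end CircleAverage

section Poisson

open Real Set InnerProductSpace

variable {c w z : ℂ} {r R : ℝ}

theorem poissonKernel_nonneg (hw : w ∈ closedBall c R) (hz : z ∈ sphere c R) :
    0 ≤ poissonKernel c w z := by
  rw [mem_closedBall, dist_eq_norm] at hw
  rw [mem_sphere, dist_eq_norm] at hz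
  rw [poissonKernel_def, hz]
  have := pow_le_pow_left₀ (norm_nonneg _) hw 2
  exact div_nonneg (sub_nonneg.2 this) (sq_nonneg _)

theorem continuousOn_uncurry_poissonKernel (c : ℂ) :
    ContinuousOn (poissonKernel c).uncurry {p | p.1 ≠ p.2} := by
  have : (poissonKernel c).uncurry = fun p : ℂ × ℂ =>
      (‖p.2 - c‖ ^ 2 - ‖p.1 - c‖ ^ 2) / ‖p.2 - c - (p.1 - c)‖ ^ 2 := by
    ext p
    rw [Function.uncurry, poissonKernel_def]
  rw [this]
  refine ContinuousOn.div (by fun_prop) (by fun_prop) fun p hp => ?_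
  simpa [sub_eq_zero] using Ne.symm hp

theorem continuousOn_poissonKernel_sphere (hw : w ∈ ball c R) :
    ContinuousOn (poissonKernel c w) (sphere c R) :=
  (continuousOn_uncurry_poissonKernel c).comp (f := fun z => (w, z)) (by fun_prop)
    fun _ hz => (ne_of_mem_of_not_mem hz fun h => (mem_ball.1 hw).ne h).symm

theorem circleAverage_poissonKernel_left (hr : |r| < R) (hz : z ∈ sphere c R) :
    circleAverage (poissonKernel c · z) c r = 1 := by
  have hzc : z - c ≠ 0 := by
    rw [← norm_ne_zero_iff, ← dist_eq_norm, mem_sphere.1 hz]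
    exact ((abs_nonneg r).trans_lt hr).ne'
  have hharm : HarmonicOnNhd (poissonKernel c · z) (closedBall c |r|) := by
    intro w hw
    have hne : z - c - (w - c) ≠ 0 := by
      rw [sub_sub_sub_cancel_right, sub_ne_zero]
      rintro rfl
      exact ((mem_closedBall.1 hw).trans_lt hr).ne (mem_sphere.1 hz)
    simp only [poissonKernel_eq_re_herglotzRieszKernel]
    refine AnalyticAt.harmonicAt_re ?_
    simp only [herglotzRieszKernel_def]
    fun_prop (disch := exact hne)
  rw [hharm.circleAverage_eq, poissonKernel_def]
  simp [hzc]

/-- A function `φ` on a closed disk is *Poisson subharmonic* if it is continuous and bounded above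
by the Poisson integral of its boundary values. This is subharmonicity in the form in which it
compares the means of `φ` over concentric circles. -/
structure PoissonSubharmonic (φ : ℂ → ℝ) (c : ℂ) (R : ℝ) : Prop where
  continuousOn : ContinuousOn φ (closedBall c R)
  le_circleAverage : ∀ w ∈ ball c R, φ w ≤ circleAverage (poissonKernel c w • φ) c R

theorem circleIntegrable_poissonKernel_smul {φ : ℂ → ℝ} (hφ : ContinuousOn φ (sphere c R))
    (hw : w ∈ ball c R) : CircleIntegrable (poissonKernel c w • φ) c R :=
  ((continuousOn_poissonKernel_sphere hw).smul hφ).circleIntegrable (pos_of_mem_ball hw).le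

theorem le_circleAverage_poissonKernel_smul {u φ : ℂ → ℝ}
    (hu : HarmonicContOnCl u (ball c R)) (hφ : ContinuousOn φ (sphere c R))
    (hle : ∀ z ∈ sphere c R, u z ≤ φ z) (hw : w ∈ ball c R) :
    u w ≤ circleAverage (poissonKernel c w • φ) c R := by
  rw [← hu.circleAverage_poissonKernel_smul hw]
  have hucont := hu.continuousOn_ball.mono sphere_subset_closedBall
  refine circleAverage_mono (circleIntegrable_poissonKernel_smul hucont hw)
    (circleIntegrable_poissonKernel_smul hφ hw) fun z hz => ?_
  rw [abs_of_pos (pos_of_mem_ball hw)] at hz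
  exact mul_le_mul_of_nonneg_left (hle z hz)
    (poissonKernel_nonneg (ball_subset_closedBall hw) hz)

namespace PoissonSubharmonic

variable {φ ψ : ℂ → ℝ}

theorem add (hφ : PoissonSubharmonic φ c R) (hψ : PoissonSubharmonic ψ c R) :
    PoissonSubharmonic (φ + ψ) c R where
  continuousOn := hφ.continuousOn.add hψ.continuousOn
  le_circleAverage w hw := by
    have hint {φ : ℂ → ℝ} (hφ : PoissonSubharmonic φ c R) :=
      circleIntegrable_poissonKernel_smul (hφ.continuousOn.mono sphere_subset_closedBall) hw
    rw [smul_add, circleAverage_add (hint hφ) (hint hψ)]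
    exact add_le_add (hφ.le_circleAverage w hw) (hψ.le_circleAverage w hw)

theorem circleAverage_mono (hφ : PoissonSubharmonic φ c R) (hr0 : 0 ≤ r) (hrR : r ≤ R) :
    circleAverage φ c r ≤ circleAverage φ c R := by
  obtain rfl | hlt := hrR.eq_or_lt
  · rfl
  have hR : 0 < R := hr0.trans_lt hlt
  have hsph : sphere c |r| ⊆ ball c R := by
    rw [abs_of_nonneg hr0]
    exact sphere_subset_closedBall.trans (closedBall_subset_ball hlt)
  have hcont : ContinuousOn (fun w z => poissonKernel c w z • φ z).uncurry
      (sphere c |r| ×ˢ sphere c |R|) := by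
    rw [abs_of_pos hR]
    refine ((continuousOn_uncurry_poissonKernel c).mono ?_).smul
      ((hφ.continuousOn.mono sphere_subset_closedBall).comp continuousOn_snd fun p hp => hp.2)
    rintro p hp heq
    exact (mem_ball.1 (hsph hp.1)).ne (heq ▸ hp.2)
  calc circleAverage φ c r
      ≤ circleAverage (fun w => circleAverage (poissonKernel c w • φ) c R) c r := by
        refine Real.circleAverage_mono ?_ ?_ fun w hw => hφ.le_circleAverage w (hsph hw)
        · exact (hφ.continuousOn.mono (hsph.trans ball_subset_closedBall)).circleIntegrable'
        · exact circleIntegrable_circleAverage hcont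
    _ = circleAverage (fun z => circleAverage (fun w => poissonKernel c w z • φ z) c r) c R :=
        circleAverage_circleAverage_comm hcont
    _ = circleAverage φ c R := by
        refine circleAverage_congr_sphere fun z hz => ?_
        rw [abs_of_pos hR] at hz
        have hkernel := circleAverage_poissonKernel_left ((abs_of_nonneg hr0).trans_lt hlt) hz
        simp only [smul_eq_mul, mul_comm _ (φ z)]
        simp only [← smul_eq_mul, circleAverage_fun_smul]
        rw [hkernel, smul_eq_mul, mul_one]

theorem setIntegral_ball_le (hφ : PoissonSubharmonic φ c R) (hR : 0 ≤ R) :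
    ∫ z in ball c R, φ z ≤ π * R ^ 2 * circleAverage φ c R := by
  rw [setIntegral_ball_eq_integral_circleAverage hR hφ.continuousOn]
  have hcont : ContinuousOn (fun r => circleAverage φ c r) (Icc 0 R) :=
    ContinuousOn.circleAverage (hφ.continuousOn.mono fun z hz => by
      simpa [dist_eq_norm] using hz.2) fun r hr => hr.1
  calc ∫ r in 0..R, (2 * π * r) • circleAverage φ c r
      ≤ ∫ r in 0..R, (2 * π * r) • circleAverage φ c R := by
        refine intervalIntegral.integral_mono_on hR ?_ ?_ fun r hr => ?_
        · exact ContinuousOn.intervalIntegrable_of_Icc hR (by fun_prop)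
        · exact Continuous.intervalIntegrable (by fun_prop) _ _
        · exact smul_le_smul_of_nonneg_left (hφ.circleAverage_mono hr.1 hr.2)
            (mul_nonneg two_pi_pos.le hr.1)
    _ = π * R ^ 2 * circleAverage φ c R := by
        simp only [smul_eq_mul, intervalIntegral.integral_mul_const, mul_assoc,
          intervalIntegral.integral_const_mul, integral_id]
        ring

end PoissonSubharmonic

theorem poissonSubharmonic_norm_sq {F : Type*} [NormedAddCommGroup F] [InnerProductSpace ℝ F]
    {f : ℂ → F} (hcont : ContinuousOn f (closedBall c R))
    (hharm : ∀ e : F, HarmonicOnNhd (fun z => ⟪e, f z⟫_ℝ) (ball c R)) :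
    PoissonSubharmonic (fun z => ‖f z‖ ^ 2) c R where
  continuousOn := hcont.norm.pow 2
  le_circleAverage w hw := by
    have hminorant : HarmonicContOnCl (fun z => (2 : ℝ) • ⟪f w, f z⟫_ℝ - ‖f w‖ ^ 2) (ball c R) :=
      ((HarmonicContOnCl.mk_ball (hharm (f w)) (by fun_prop)).const_smul 2).sub_const _
    have hle (z : ℂ) : (2 : ℝ) • ⟪f w, f z⟫_ℝ - ‖f w‖ ^ 2 ≤ ‖f z‖ ^ 2 := by
      rw [smul_eq_mul]
      linarith [sq_nonneg ‖f w - f z‖, norm_sub_sq_real (f w) (f z)]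
    have heq : (2 : ℝ) • ⟪f w, f w⟫_ℝ - ‖f w‖ ^ 2 = ‖f w‖ ^ 2 := by
      rw [smul_eq_mul, real_inner_self_eq_norm_sq]
      ring
    rw [← heq]
    exact le_circleAverage_poissonKernel_smul hminorant
      ((hcont.norm.pow 2).mono sphere_subset_closedBall) (fun z _ => hle z) hw

end Poisson

section Harmonic

open Complex (I)
open Set InnerProductSpace

variable {F : Type*} [NormedAddCommGroup F] [InnerProductSpace ℝ F]

theorem fderiv_apply_eq_re_mul {v : ℂ → ℝ} (z h : ℂ) :
    fderiv ℝ v z h = ((fderiv ℝ v z 1 - I * fderiv ℝ v z I) * h).re := by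
  have hh : h = h.re • (1 : ℂ) + h.im • I := by simp
  conv_lhs => rw [hh, map_add, map_smul, map_smul]
  simp only [Complex.mul_re, Complex.mul_im, Complex.sub_re, Complex.sub_im, Complex.ofReal_re,
    Complex.ofReal_im, Complex.I_re, Complex.I_im, smul_eq_mul]
  ring

theorem harmonicAt_fderiv_apply_real {v : ℂ → ℝ} {z : ℂ} (hv : HarmonicAt v z) (h : ℂ) :
    HarmonicAt (fun z => fderiv ℝ v z h) z := by
  simp only [fderiv_apply_eq_re_mul (v := v) (h := h)]
  exact ((HarmonicAt.analyticAt_complex_partial hv).mul analyticAt_const).harmonicAt_re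

theorem harmonicAt_inner_fderiv_apply {w : ℂ → F} {z : ℂ} (hw : HarmonicAt w z) (e : F) (h : ℂ) :
    HarmonicAt (fun z => ⟪e, fderiv ℝ w z h⟫_ℝ) z := by
  refine (harmonicAt_congr_nhds ?_).1
    (harmonicAt_fderiv_apply_real (hw.comp_CLM (innerSL ℝ e)) h)
  filter_upwards [hw.eventually] with y hy
  rw [((innerSL ℝ e).hasFDerivAt.comp y
    (hy.1.differentiableAt two_ne_zero).hasFDerivAt).fderiv]
  simp

/-- The density of the Dirichlet energy: the squared Hilbert–Schmidt norm of the differential of a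
map on the complex plane. -/
noncomputable def energyDensity (w : ℂ → F) (z : ℂ) : ℝ :=
  ‖fderiv ℝ w z 1‖ ^ 2 + ‖fderiv ℝ w z I‖ ^ 2

/-- The Hopf differential `4⟪∂w, ∂w⟫` of a map `w` on the complex plane, written in terms of the
partial derivatives of `w`. It is holomorphic when `w` is harmonic, and vanishes exactly where
`w` is weakly conformal. -/
noncomputable def hopfDifferential (w : ℂ → F) (z : ℂ) : ℂ :=
  (‖fderiv ℝ w z 1‖ ^ 2 - ‖fderiv ℝ w z I‖ ^ 2 : ℝ) +
    (-2 * ⟪fderiv ℝ w z 1, fderiv ℝ w z I⟫_ℝ : ℝ) * I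

theorem norm_sq_clm_apply_eq (A : ℂ →L[ℝ] F) (h : ℂ) :
    ‖A h‖ ^ 2 = h.re ^ 2 * ‖A 1‖ ^ 2 + 2 * (h.re * h.im * ⟪A 1, A I⟫_ℝ) + h.im ^ 2 * ‖A I‖ ^ 2 := by
  have hh : h = h.re • (1 : ℂ) + h.im • I := by simp
  conv_lhs => rw [hh, map_add, map_smul, map_smul, norm_add_sq_real]
  simp only [norm_smul, mul_pow, Real.norm_eq_abs, sq_abs, real_inner_smul_left,
    real_inner_smul_right]
  ring

theorem sq_norm_mul_energyDensity (w : ℂ → F) (z h : ℂ) :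
    ‖h‖ ^ 2 * energyDensity w z = ‖fderiv ℝ w z h‖ ^ 2 + ‖fderiv ℝ w z (h * I)‖ ^ 2 := by
  rw [norm_sq_clm_apply_eq _ h, norm_sq_clm_apply_eq _ (h * I), energyDensity, Complex.sq_norm,
    Complex.normSq_apply, Complex.mul_I_re, Complex.mul_I_im]
  ring

theorem re_sq_mul_hopfDifferential (w : ℂ → F) (z h : ℂ) :
    (h ^ 2 * hopfDifferential w z).re = ‖fderiv ℝ w z h‖ ^ 2 - ‖fderiv ℝ w z (h * I)‖ ^ 2 := by
  have hre : (hopfDifferential w z).re = ‖fderiv ℝ w z 1‖ ^ 2 - ‖fderiv ℝ w z I‖ ^ 2 := by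
    simp [hopfDifferential, -Complex.ofReal_sub]
  have him : (hopfDifferential w z).im = -2 * ⟪fderiv ℝ w z 1, fderiv ℝ w z I⟫_ℝ := by
    simp [hopfDifferential, -Complex.ofReal_sub]
  rw [norm_sq_clm_apply_eq _ h, norm_sq_clm_apply_eq _ (h * I), Complex.mul_re, hre, him, pow_two h,
    Complex.mul_re, Complex.mul_im, Complex.mul_I_re, Complex.mul_I_im]
  ring

theorem differentiableAt_complex_of_cauchyRiemann {a b : ℂ → ℝ} {a' b' : ℂ →L[ℝ] ℝ} {z : ℂ}
    (ha : HasFDerivAt a a' z) (hb : HasFDerivAt b b' z) (h₁ : a' 1 = b' I) (hI : a' I = -b' 1) :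
    DifferentiableAt ℂ (fun z => (a z : ℂ) + b z * I) z := by
  have h := (Complex.ofRealCLM.hasFDerivAt.comp z ha).add
    ((Complex.ofRealCLM.hasFDerivAt.comp z hb).mul_const I)
  refine differentiableAt_complex_iff_differentiableAt_real.2 ⟨h.differentiableAt, ?_⟩
  rw [show fderiv ℝ (fun z => (a z : ℂ) + b z * I) z = _ from h.fderiv]
  apply Complex.ext <;> simp [h₁, hI]

theorem differentiableAt_hopfDifferential {w : ℂ → F} {z : ℂ} (hw : HarmonicAt w z) :
    DifferentiableAt ℂ (hopfDifferential w) z := by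
  have hD : DifferentiableAt ℝ (fderiv ℝ w) z :=
    (hw.1.fderiv_right (m := 1) (by norm_num)).differentiableAt one_ne_zero
  set D := fderiv ℝ (fderiv ℝ w) z
  have hpartial (e : ℂ) : HasFDerivAt (fun z => fderiv ℝ w z e) (D.flip e) z := by
    simpa using hD.hasFDerivAt.clm_apply (hasFDerivAt_const e z)
  have hsymm : D I 1 = D 1 I := hw.1.isSymmSndFDerivAt (by simp) I 1
  have hlaplace : D I I = -D 1 1 := by
    have := hw.2.eq_of_nhds
    simp only [laplacian_eq_iteratedFDeriv_complexPlane, iteratedFDeriv_two_apply] at this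
    exact (neg_eq_of_add_eq_zero_right this).symm
  have hre := (hpartial 1).norm_sq.sub (hpartial I).norm_sq
  have him := ((hpartial 1).inner ℝ (hpartial I)).const_mul (-2)
  set re' := 2 • (innerSL ℝ (fderiv ℝ w z 1)).comp (D.flip 1) -
    2 • (innerSL ℝ (fderiv ℝ w z I)).comp (D.flip I)
  set im' := (-2 : ℝ) • (fderivInnerCLM ℝ (fderiv ℝ w z 1, fderiv ℝ w z I)).comp
    ((D.flip 1).prod (D.flip I))
  have hre_apply (h : ℂ) :
      re' h = 2 * ⟪fderiv ℝ w z 1, D h 1⟫_ℝ - 2 * ⟪fderiv ℝ w z I, D h I⟫_ℝ := by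
    simp [re']
  have him_apply (h : ℂ) :
      im' h = -2 * (⟪fderiv ℝ w z 1, D h I⟫_ℝ + ⟪fderiv ℝ w z I, D h 1⟫_ℝ) := by
    simp [im', real_inner_comm (D h 1)]
  refine differentiableAt_complex_of_cauchyRiemann hre him ?_ ?_
  · rw [hre_apply, him_apply, hsymm, hlaplace, inner_neg_right]
    ring
  · rw [hre_apply, him_apply, hsymm, hlaplace, inner_neg_right]
    ring

theorem continuousOn_fderiv_of_contDiffAt {E F : Type*} [NormedAddCommGroup E] [NormedSpace ℝ E]
    [NormedAddCommGroup F] [NormedSpace ℝ F] {w : E → F} {s : Set E}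
    (hw : ∀ z ∈ s, ContDiffAt ℝ 1 w z) : ContinuousOn (fderiv ℝ w) s :=
  fun z hz => ((hw z hz).continuousAt_fderiv one_ne_zero).continuousWithinAt

variable {w : ℂ → F} {c : ℂ} {R : ℝ}

theorem poissonSubharmonic_energyDensity (hC1 : ∀ z ∈ closedBall c R, ContDiffAt ℝ 1 w z)
    (hharm : HarmonicOnNhd w (ball c R)) : PoissonSubharmonic (energyDensity w) c R := by
  have hcont := continuousOn_fderiv_of_contDiffAt hC1
  have hpartial (h : ℂ) : PoissonSubharmonic (fun z => ‖fderiv ℝ w z h‖ ^ 2) c R :=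
    poissonSubharmonic_norm_sq (by fun_prop) fun e z hz =>
      harmonicAt_inner_fderiv_apply (hharm z hz) e h
  exact (hpartial 1).add (hpartial I)

theorem continuousOn_hopfDifferential {s : Set ℂ} (hw : ContinuousOn (fderiv ℝ w) s) :
    ContinuousOn (hopfDifferential w) s := by
  unfold hopfDifferential
  fun_prop

theorem circleAverage_radial_eq_circleAverage_tangential (hR : 0 < R)
    (hC1 : ∀ z ∈ closedBall c R, ContDiffAt ℝ 1 w z) (hharm : HarmonicOnNhd w (ball c R)) :
    Real.circleAverage (fun z => ‖fderiv ℝ w z (z - c)‖ ^ 2) c R =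
      Real.circleAverage (fun z => ‖fderiv ℝ w z ((z - c) * I)‖ ^ 2) c R := by
  have hfderiv : ContinuousOn (fderiv ℝ w) (sphere c R) :=
    (continuousOn_fderiv_of_contDiffAt hC1).mono sphere_subset_closedBall
  set g : ℂ → ℂ := fun z => (z - c) ^ 2 * hopfDifferential w z
  have hhol : DiffContOnCl ℂ g (ball c |R|) := by
    rw [abs_of_pos hR]
    refine .mk_ball (fun z hz => ?_) ?_
    · have := differentiableAt_hopfDifferential (hharm z hz)
      exact DifferentiableAt.differentiableWithinAt (by fun_prop)
    · have := continuousOn_hopfDifferential (continuousOn_fderiv_of_contDiffAt hC1)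
      fun_prop
  have hg : CircleIntegrable g c R := by
    have := continuousOn_hopfDifferential hfderiv
    exact ContinuousOn.circleIntegrable hR.le (by fun_prop)
  rw [← sub_eq_zero]
  calc _ = Real.circleAverage (fun z => (g z).re) c R := by
        simp only [g, re_sq_mul_hopfDifferential]
        exact (Real.circleAverage_fun_sub (ContinuousOn.circleIntegrable hR.le (by fun_prop))
          (ContinuousOn.circleIntegrable hR.le (by fun_prop))).symm
    _ = (Real.circleAverage g c R).re := Complex.reCLM.circleAverage_comp_comm hg
    _ = 0 := by
        rw [hhol.circleAverage]
        simp [g]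

theorem sq_mul_circleAverage_energyDensity (hR : 0 < R)
    (hC1 : ∀ z ∈ closedBall c R, ContDiffAt ℝ 1 w z) (hharm : HarmonicOnNhd w (ball c R)) :
    R ^ 2 * Real.circleAverage (energyDensity w) c R =
      2 * Real.circleAverage (fun z => ‖fderiv ℝ w z ((z - c) * I)‖ ^ 2) c R := by
  have hfderiv : ContinuousOn (fderiv ℝ w) (sphere c R) :=
    (continuousOn_fderiv_of_contDiffAt hC1).mono sphere_subset_closedBall
  calc R ^ 2 * Real.circleAverage (energyDensity w) c R
      = Real.circleAverage (fun z => R ^ 2 * energyDensity w z) c R :=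
        (Real.circleAverage_fun_smul (a := R ^ 2) (f := energyDensity w)).symm
    _ = Real.circleAverage
          (fun z => ‖fderiv ℝ w z (z - c)‖ ^ 2 + ‖fderiv ℝ w z ((z - c) * I)‖ ^ 2) c R := by
        refine Real.circleAverage_congr_sphere fun z hz => ?_
        rw [abs_of_pos hR, mem_sphere, dist_eq_norm] at hz
        simp only [← sq_norm_mul_energyDensity, hz]
    _ = 2 * Real.circleAverage (fun z => ‖fderiv ℝ w z ((z - c) * I)‖ ^ 2) c R := by
        rw [Real.circleAverage_fun_add (ContinuousOn.circleIntegrable hR.le (by fun_prop))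
            (ContinuousOn.circleIntegrable hR.le (by fun_prop)),
          circleAverage_radial_eq_circleAverage_tangential hR hC1 hharm, two_mul]

theorem deriv_comp_circleMap {E : Type*} [NormedAddCommGroup E] [NormedSpace ℝ E] {w : ℂ → E}
    {c : ℂ} {R θ : ℝ} (hw : DifferentiableAt ℝ w (circleMap c R θ)) :
    deriv (fun t => w (circleMap c R t)) θ =
      fderiv ℝ w (circleMap c R θ) ((circleMap c R θ - c) * I) := by
  rw [circleMap_sub_center]
  exact (hw.hasFDerivAt.comp_hasDerivAt θ (hasDerivAt_circleMap c R θ)).deriv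

theorem setIntegral_energyDensity_ball_le (hR : 0 < R)
    (hC1 : ∀ z ∈ closedBall c R, ContDiffAt ℝ 1 w z) (hharm : HarmonicOnNhd w (ball c R)) :
    ∫ z in ball c R, energyDensity w z ≤
      ∫ θ in 0..2 * Real.pi, ‖deriv (fun t => w (circleMap c R t)) θ‖ ^ 2 := by
  have hdiff (θ : ℝ) : DifferentiableAt ℝ w (circleMap c R θ) :=
    (hC1 _ (circleMap_mem_closedBall c hR.le θ)).differentiableAt one_ne_zero
  calc ∫ z in ball c R, energyDensity w z
      ≤ Real.pi * (R ^ 2 * Real.circleAverage (energyDensity w) c R) := by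
        rw [← mul_assoc]
        exact (poissonSubharmonic_energyDensity hC1 hharm).setIntegral_ball_le hR.le
    _ = 2 * Real.pi * Real.circleAverage (fun z => ‖fderiv ℝ w z ((z - c) * I)‖ ^ 2) c R := by
        rw [sq_mul_circleAverage_energyDensity hR hC1 hharm]
        ring
    _ = ∫ θ in 0..2 * Real.pi, ‖deriv (fun t => w (circleMap c R t)) θ‖ ^ 2 := by
        rw [Real.circleAverage_def, smul_eq_mul, mul_inv_cancel_left₀ Real.two_pi_pos.ne']
        simp only [deriv_comp_circleMap (hdiff _)]

end Harmonic

section Transport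

open Set InnerProductSpace

variable {V V' F : Type*} [NormedAddCommGroup V] [InnerProductSpace ℝ V] [FiniteDimensional ℝ V]
  [NormedAddCommGroup V'] [InnerProductSpace ℝ V'] [FiniteDimensional ℝ V']
  [NormedAddCommGroup F] [NormedSpace ℝ F]

theorem laplacian_comp_linearIsometryEquiv (L : V ≃ₗᵢ[ℝ] V') (f : V' → F) :
    Laplacian.laplacian (f ∘ L) = Laplacian.laplacian f ∘ L := by
  let b := stdOrthonormalBasis ℝ V
  ext x
  rw [Function.comp_apply, laplacian_eq_iteratedFDeriv_orthonormalBasis _ b,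
    laplacian_eq_iteratedFDeriv_orthonormalBasis _ (b.map L)]
  refine Finset.sum_congr rfl fun i _ => ?_
  have h := L.toContinuousLinearEquiv.iteratedFDerivWithin_comp_right f uniqueDiffOn_univ
    (mem_univ (L x)) 2
  rw [preimage_univ, iteratedFDerivWithin_univ, iteratedFDerivWithin_univ] at h
  refine (congrArg (fun A => A ![b i, b i]) h).trans ?_
  rw [ContinuousMultilinearMap.compContinuousLinearMap_apply]
  congr 1
  ext k
  fin_cases k <;> simp

theorem harmonicAt_comp_linearIsometryEquiv (L : V ≃ₗᵢ[ℝ] V') {f : V' → F} {x : V}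
    (hf : HarmonicAt f (L x)) : HarmonicAt (f ∘ L) x := by
  refine ⟨hf.1.comp x L.contDiff.contDiffAt, ?_⟩
  rw [laplacian_comp_linearIsometryEquiv]
  exact L.continuous.continuousAt.eventually hf.2

theorem harmonicOnNhd_of_sum_fderiv_eq_zero {ι : Type*} [Fintype ι] (b : OrthonormalBasis ι ℝ V)
    {f : V → F} {s : Set V} (hs : IsOpen s) (hf : ContDiffOn ℝ 2 f s)
    (hsum : ∀ x ∈ s, ∑ i, fderiv ℝ (fun y => fderiv ℝ f y (b i)) x (b i) = 0) :
    HarmonicOnNhd f s := by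
  have hC2 : ∀ x ∈ s, ContDiffAt ℝ 2 f x := fun x hx => hf.contDiffAt (hs.mem_nhds hx)
  refine fun x hx => ⟨hC2 x hx, ?_⟩
  filter_upwards [hs.mem_nhds hx] with y hy
  have hD : DifferentiableAt ℝ (fderiv ℝ f) y :=
    ((hC2 y hy).fderiv_right (m := 1) (by norm_num)).differentiableAt one_ne_zero
  rw [laplacian_eq_iteratedFDeriv_orthonormalBasis f b, Pi.zero_apply, ← hsum y hy]
  refine Finset.sum_congr rfl fun i _ => ?_
  rw [iteratedFDeriv_two_apply, fderiv_clm_apply hD (differentiableAt_const _)]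
  simp

theorem harmonicAt_euclideanSpace {ι : Type*} [Fintype ι] {f : V → EuclideanSpace ℝ ι} {x : V}
    (hf : ∀ j, HarmonicAt (fun y => f y j) x) : HarmonicAt f x := by
  refine ⟨contDiffAt_euclidean.2 fun j => (hf j).1, ?_⟩
  filter_upwards [Filter.eventually_all.2 fun j => (hf j).eventually] with y hy
  ext j
  have hcomp := (contDiffAt_euclidean.2 fun j => (hy j).1).laplacian_CLM_comp_left
    (l := EuclideanSpace.proj (𝕜 := ℝ) j)
  exact hcomp.symm.trans (hy j).2.eq_of_nhds

end Transport

section Energy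

open Complex (I)
open InnerProductSpace

theorem harmonic_dirichlet_boundary_bound_general {V F : Type*}
    [NormedAddCommGroup V] [InnerProductSpace ℝ V] [FiniteDimensional ℝ V]
    [MeasurableSpace V] [BorelSpace V] [NormedAddCommGroup F] [InnerProductSpace ℝ F]
    (b : OrthonormalBasis (Fin 2) ℝ V) {c : V} {R : ℝ} (hR : 0 < R) {ζ : V → F}
    (hC1 : ∀ x ∈ closedBall c R, ContDiffAt ℝ 1 ζ x) (hharm : HarmonicOnNhd ζ (ball c R)) :
    ∫ x in ball c R, ∑ i, ‖fderiv ℝ ζ x (b i)‖ ^ 2 ≤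
      ∫ θ in 0..2 * Real.pi,
        ‖deriv (fun t : ℝ => ζ (c + R • (Real.cos t • b 0 + Real.sin t • b 1))) θ‖ ^ 2 := by
  let L : ℂ ≃ₗᵢ[ℝ] V := Complex.orthonormalBasisOneI.equiv b (Equiv.refl _)
  have hL (z : ℂ) : L z = z.re • b 0 + z.im • b 1 := by
    simp [L, OrthonormalBasis.equiv_apply]
  have hball : L ⁻¹' ball c R = ball (L.symm c) R := L.preimage_ball c R
  have hL1 : L 1 = b 0 := by simp [hL]
  have hLI : L I = b 1 := by simp [hL]
  have hcurve (t : ℝ) :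
      L (circleMap (L.symm c) R t) = c + R • (Real.cos t • b 0 + Real.sin t • b 1) := by
    rw [circleMap, map_add, L.apply_symm_apply]
    simp [hL, Complex.exp_ofReal_mul_I_re, Complex.exp_ofReal_mul_I_im, mul_smul]
  have hdensity (z : ℂ) : energyDensity (ζ ∘ L) z = ∑ i, ‖fderiv ℝ ζ (L z) (b i)‖ ^ 2 := by
    have hfderiv : fderiv ℝ (ζ ∘ L) z = (fderiv ℝ ζ (L z)).comp (L : ℂ →L[ℝ] V) :=
      L.toContinuousLinearEquiv.comp_right_fderiv
    simp [energyDensity, hfderiv, hL1, hLI]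
  have hplane := setIntegral_energyDensity_ball_le (w := ζ ∘ L) (c := L.symm c) hR
    (fun z hz => (hC1 (L z) ((L.preimage_closedBall c R).ge hz)).comp z
      L.contDiff.contDiffAt)
    (fun z hz => harmonicAt_comp_linearIsometryEquiv L (hharm (L z) (hball.ge hz)))
  rw [← L.measurePreserving.setIntegral_preimage_emb L.toHomeomorph.measurableEmbedding, hball]
  simpa only [Function.comp_apply, hcurve, hdensity] using hplane

end Energy

/-- The Dirichlet energy of a harmonic function on the unit disk is controlled by the
tangential energy of its boundary value. -/
theorem harmonic_dirichlet_boundary_bound (q : ℕ) (hq : 1 ≤ q)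
    (ζ : EuclideanSpace ℝ (Fin 2) → EuclideanSpace ℝ (Fin q))
    (hC1 : ∃ U : Set (EuclideanSpace ℝ (Fin 2)),
        IsOpen U ∧ closedBall (0 : EuclideanSpace ℝ (Fin 2)) 1 ⊆ U ∧ ContDiffOn ℝ 1 ζ U)
    (hC2 : ∀ j : Fin q, ContDiffOn ℝ 2 (fun x => ζ x j) (ball (0 : EuclideanSpace ℝ (Fin 2)) 1))
    (hharm : ∀ j : Fin q, ∀ x ∈ ball (0 : EuclideanSpace ℝ (Fin 2)) 1,
      ∑ i : Fin 2,
        fderiv ℝ (fun y => fderiv ℝ (fun z => ζ z j) y (EuclideanSpace.single i (1 : ℝ))) x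
          (EuclideanSpace.single i (1 : ℝ)) = 0) :
    ∫ x in ball (0 : EuclideanSpace ℝ (Fin 2)) 1,
        (∑ i : Fin 2, ‖fderiv ℝ ζ x (EuclideanSpace.single i (1 : ℝ))‖ ^ 2) ∂volume ≤
      ∫ θ in (0 : ℝ)..(2 * Real.pi),
        ‖deriv (fun t : ℝ =>
            ζ ((EuclideanSpace.equiv (Fin 2) ℝ).symm ![Real.cos t, Real.sin t])) θ‖ ^ 2 := by
  obtain ⟨U, hU, hball, hζ⟩ := hC1
  let e := EuclideanSpace.basisFun (Fin 2) ℝ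
  have hcomponents (j : Fin q) : InnerProductSpace.HarmonicOnNhd (fun x => ζ x j) (ball 0 1) :=
    harmonicOnNhd_of_sum_fderiv_eq_zero e isOpen_ball (hC2 j) (by simpa [e] using hharm j)
  have hcurve (t : ℝ) : (EuclideanSpace.equiv (Fin 2) ℝ).symm ![Real.cos t, Real.sin t] =
      0 + (1 : ℝ) • (Real.cos t • e 0 + Real.sin t • e 1) := by
    ext i
    fin_cases i <;> simp [e]
  have hgeneral := harmonic_dirichlet_boundary_bound_general e one_pos
    (fun x hx => hζ.contDiffAt (hU.mem_nhds (hball hx)))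
    (fun x hx => harmonicAt_euclideanSpace fun j => hcomponents j x hx)
  simpa only [hcurve, e, EuclideanSpace.basisFun_apply] using hgeneral
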